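/- arXiv:1702.03075 — 2 statements merged into one kernel-verified Lean document; each statement's English description precedes it below -/
import Mathlib

section
/- For every even integer k ≥ 4, the digraph S_k with incoming vertices i_1,…,i_k and outgoing vertices o_1,…,o_k is a k-in-out graph, and it has exactly 2k−1 vertices, which is the minimum possible number of vertices for a k-in-out graph. -/
/-- A directed path in the digraph with edge relation `E` and vertex set `Vset`:
a nonempty list of distinct vertices of `Vset`, with consecutive vertices joined
by directed edges. -/
def IsPathOn {α : Type*} (E : α → α → Prop) (Vset : Finset α) (p : List α) : Prop :=
  p ≠ [] ∧ p.Nodup ∧ p.Chain' E ∧ ∀ x ∈ p, x ∈ Vset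

/-- A Hamiltonian path from `u` to `v` in the digraph with edge relation `E`
and vertex set `Vset`: a list of distinct vertices containing every vertex of `Vset`
(and no others), starting at `u`, ending at `v`, with consecutive vertices joined
by directed edges. -/
def IsHamPathOn {α : Type*} (E : α → α → Prop) (Vset : Finset α) (u v : α)
    (p : List α) : Prop :=
  p.Nodup ∧ p.Chain' E ∧ p.head? = some u ∧ p.getLast? = some v ∧ ∀ x, x ∈ p ↔ x ∈ Vset

/-- The single visit condition: there is no collection of two or more pairwise
vertex-disjoint directed paths, each starting at an incoming vertex and ending at an
outgoing vertex, whose union visits every vertex. -/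
def SingleVisit {α : Type*} (E : α → α → Prop) (Vset : Finset α) {k : ℕ}
    (inc out : Fin k → α) : Prop :=
  ¬ ∃ P : Finset (List α), 2 ≤ P.card ∧
      (∀ p ∈ P, IsPathOn E Vset p ∧ (∃ j, p.head? = some (inc j)) ∧
        (∃ m, p.getLast? = some (out m))) ∧
      (∀ p ∈ P, ∀ q ∈ P, p ≠ q → ∀ x, x ∈ p → x ∉ q) ∧
      (∀ x ∈ Vset, ∃ p ∈ P, x ∈ p)

/-- A `k`-in-out graph: a digraph (no loops, all edges within the vertex set) together
with `k` distinct incoming vertices and `k` distinct outgoing vertices (the two sets may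
overlap), satisfying the paired vertices condition and the single visit condition. -/
structure IsInOutGraph {α : Type*} (E : α → α → Prop) (Vset : Finset α) {k : ℕ}
    (inc out : Fin k → α) : Prop where
  no_loops : ∀ x, ¬ E x x
  edge_mem : ∀ x y, E x y → x ∈ Vset ∧ y ∈ Vset
  inc_mem : ∀ j, inc j ∈ Vset
  out_mem : ∀ j, out j ∈ Vset
  inc_inj : Function.Injective inc
  out_inj : Function.Injective out
  paired : ∀ j m, (∃ p, IsHamPathOn E Vset (inc j) (out m) p) ↔ j = m
  single_visit : SingleVisit E Vset inc out

/-- The directed edge set of the graph `S_k` for even `k ≥ 4`. -/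
def evenEdges (k : ℕ) : Finset (ℕ × ℕ) :=
  ((Finset.Icc 1 ((k - 2) / 2)).biUnion fun i =>
      {(4*i-2, 4*i-1), (4*i-1, 4*i-2), (4*i-1, 4*i), (4*i, 4*i-1),
        (4*i, 4*i+1), (4*i+1, 4*i)}) ∪
  ((Finset.Icc 1 ((k - 4) / 2)).biUnion fun i => {(4*i-2, 4*i+5), (4*i+1, 4*i+2)}) ∪
  ({(1, 2), (2*k-6, 2*k-1), (2*k-3, 2*k-2), (2*k-2, 1), (2*k-2, 5),
    (2*k-1, 2*k-2)} : Finset (ℕ × ℕ))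

/-- The `m`-th outgoing vertex `o_m` (with `1 ≤ m ≤ k`) of `S_k` for even `k ≥ 4`:
`o_1 = 3`, `o_{k-2} = 2k-1`, `o_{k-1} = 2k-7`, `o_k = 2k-3`, and otherwise
`o_{2j} = 4j+3` and `o_{2j+1} = 4j-3`. -/
def evenOut (k m : ℕ) : ℕ :=
  if m = 1 then 3
  else if m = k - 2 then 2*k - 1
  else if m = k - 1 then 2*k - 7
  else if m = k then 2*k - 3
  else if Even m then 2*m + 3
  else 2*m - 5


/-! ### Edges of `S_k` -/

lemma edge_iff (m x y : ℕ) (hm : 1 ≤ m) : (x, y) ∈ evenEdges (2*m+2) ↔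
    (∃ i, 1 ≤ i ∧ i ≤ m ∧ ((x = 4*i-2 ∧ y = 4*i-1) ∨ (x = 4*i-1 ∧ y = 4*i-2) ∨
      (x = 4*i-1 ∧ y = 4*i) ∨ (x = 4*i ∧ y = 4*i-1) ∨ (x = 4*i ∧ y = 4*i+1) ∨
      (x = 4*i+1 ∧ y = 4*i))) ∨
    (∃ i, 1 ≤ i ∧ i + 1 ≤ m ∧ ((x = 4*i-2 ∧ y = 4*i+5) ∨ (x = 4*i+1 ∧ y = 4*i+2))) ∨
    (x = 1 ∧ y = 2) ∨ (x = 4*m-2 ∧ y = 4*m+3) ∨ (x = 4*m+1 ∧ y = 4*m+2) ∨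
    (x = 4*m+2 ∧ y = 1) ∨ (x = 4*m+2 ∧ y = 5) ∨ (x = 4*m+3 ∧ y = 4*m+2) := by
  have h1 : (2*m+2-2)/2 = m := by omega
  have h2 : (2*m+2-4)/2 = m-1 := by omega
  have h3 : 2*(2*m+2)-6 = 4*m-2 := by omega
  have h4 : 2*(2*m+2)-1 = 4*m+3 := by omega
  have h5 : 2*(2*m+2)-2 = 4*m+2 := by omega
  have h6 : 2*(2*m+2)-3 = 4*m+1 := by omega
  have h7 : ∀ i, i ≤ m - 1 ↔ i + 1 ≤ m := by intro i; omega
  unfold evenEdges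
  rw [h1, h2, h3, h4, h5, h6]
  simp only [Finset.mem_union, Finset.mem_biUnion, Finset.mem_Icc, Finset.mem_insert,
    Finset.mem_singleton, Prod.mk.injEq, h7, and_assoc, or_assoc]

lemma edge_up (m x : ℕ) (hm : 1 ≤ m) (h1 : 1 ≤ x) (h2 : x ≤ 4*m+1) :
    (x, x+1) ∈ evenEdges (2*m+2) := by
  rw [edge_iff m _ _ hm]
  by_cases hx : x = 1
  · right; right; omega
  by_cases hx : x = 4*m+1
  · right; right; omega
  by_cases h : x % 4 = 1
  · right; left
    exact ⟨x/4, by omega, by omega, by omega⟩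
  · left
    exact ⟨(x+2)/4, by omega, by omega, by omega⟩

lemma edge_down (m i x y : ℕ) (hm : 1 ≤ m) (h1 : 1 ≤ i) (h2 : i ≤ m)
    (h : (x = 4*i-1 ∧ y = 4*i-2) ∨ (x = 4*i ∧ y = 4*i-1) ∨ (x = 4*i+1 ∧ y = 4*i)) :
    (x, y) ∈ evenEdges (2*m+2) := by
  rw [edge_iff m _ _ hm]
  left
  exact ⟨i, h1, h2, by tauto⟩

lemma edge_skip (m i x y : ℕ) (hm : 1 ≤ m) (h1 : 1 ≤ i) (h2 : i + 1 ≤ m)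
    (h : x = 4*i-2 ∧ y = 4*i+5) : (x, y) ∈ evenEdges (2*m+2) := by
  rw [edge_iff m _ _ hm]
  right; left
  exact ⟨i, h1, h2, by tauto⟩

lemma edge_misc (m x y : ℕ) (hm : 1 ≤ m)
    (h : (x = 4*m-2 ∧ y = 4*m+3) ∨ (x = 4*m+2 ∧ y = 1) ∨ (x = 4*m+2 ∧ y = 5) ∨
      (x = 4*m+3 ∧ y = 4*m+2)) : (x, y) ∈ evenEdges (2*m+2) := by
  rw [edge_iff m _ _ hm]
  right; right; tauto

lemma edge_parity (m x y : ℕ) (hm : 1 ≤ m) (h : (x, y) ∈ evenEdges (2*m+2)) :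
    (x + y) % 2 = 1 ∧ 1 ≤ x ∧ x ≤ 4*m+3 ∧ 1 ≤ y ∧ y ≤ 4*m+3 := by
  rw [edge_iff m _ _ hm] at h
  rcases h with ⟨i, h1, h2, h⟩ | ⟨i, h1, h2, h⟩ | h <;> omega

lemma into_c (m i x : ℕ) (hm : 1 ≤ m) (hi : 1 ≤ i) (hi2 : i ≤ m)
    (h : (x, 4*i) ∈ evenEdges (2*m+2)) : x = 4*i-1 ∨ x = 4*i+1 := by
  rw [edge_iff m _ _ hm] at h
  rcases h with ⟨i, h1, h2, h⟩ | ⟨i, h1, h2, h⟩ | h <;> omega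

lemma from_c (m i x : ℕ) (hm : 1 ≤ m) (hi : 1 ≤ i) (hi2 : i ≤ m)
    (h : (4*i, x) ∈ evenEdges (2*m+2)) : x = 4*i-1 ∨ x = 4*i+1 := by
  rw [edge_iff m _ _ hm] at h
  rcases h with ⟨i, h1, h2, h⟩ | ⟨i, h1, h2, h⟩ | h <;> omega

lemma into_a (m i x : ℕ) (hm : 1 ≤ m) (hi : 1 ≤ i) (hi2 : i ≤ m + 1)
    (h : (x, 4*i-2) ∈ evenEdges (2*m+2)) : x = 4*i-1 ∨ x = 4*i-3 := by
  rw [edge_iff m _ _ hm] at h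
  rcases h with ⟨i, h1, h2, h⟩ | ⟨i, h1, h2, h⟩ | h <;> omega

lemma from_a (m i x : ℕ) (hm : 1 ≤ m) (hi : 1 ≤ i) (hi2 : i ≤ m)
    (h : (4*i-2, x) ∈ evenEdges (2*m+2)) :
    x = 4*i-1 ∨ (i < m ∧ x = 4*i+5) ∨ (i = m ∧ x = 4*m+3) := by
  rw [edge_iff m _ _ hm] at h
  rcases h with ⟨i, h1, h2, h⟩ | ⟨i, h1, h2, h⟩ | h <;> omega

lemma from_y (m x : ℕ) (hm : 1 ≤ m)
    (h : (4*m+2, x) ∈ evenEdges (2*m+2)) : x = 1 ∨ x = 5 := by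
  rw [edge_iff m _ _ hm] at h
  rcases h with ⟨i, h1, h2, h⟩ | ⟨i, h1, h2, h⟩ | h <;> omega

lemma into_b (m i x : ℕ) (hm : 1 ≤ m) (hi : 1 ≤ i) (hi2 : i ≤ m)
    (h : (x, 4*i-1) ∈ evenEdges (2*m+2)) : x = 4*i-2 ∨ x = 4*i := by
  rw [edge_iff m _ _ hm] at h
  rcases h with ⟨i, h1, h2, h⟩ | ⟨i, h1, h2, h⟩ | h <;> omega

lemma into_d (m i x : ℕ) (hm : 1 ≤ m) (hi : 1 ≤ i) (hi2 : i ≤ m)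
    (h : (x, 4*i+1) ∈ evenEdges (2*m+2)) : x = 4*i ∨ (i = 1 ∧ x = 4*m+2) ∨ (2 ≤ i ∧ x = 4*i-6) := by
  rw [edge_iff m _ _ hm] at h
  rcases h with ⟨i, h1, h2, h⟩ | ⟨i, h1, h2, h⟩ | h <;> omega

lemma into_one (m x : ℕ) (hm : 1 ≤ m) 
    (h : (x, 1) ∈ evenEdges (2*m+2)) : x = 4*m+2 := by
  rw [edge_iff m _ _ hm] at h
  rcases h with ⟨i, h1, h2, h⟩ | ⟨i, h1, h2, h⟩ | h <;> omega

lemma into_z (m x : ℕ) (hm : 1 ≤ m) 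
    (h : (x, 4*m+3) ∈ evenEdges (2*m+2)) : x = 4*m-2 := by
  rw [edge_iff m _ _ hm] at h
  rcases h with ⟨i, h1, h2, h⟩ | ⟨i, h1, h2, h⟩ | h <;> omega

lemma from_b (m i x : ℕ) (hm : 1 ≤ m) (hi : 1 ≤ i) (hi2 : i ≤ m)
    (h : (4*i-1, x) ∈ evenEdges (2*m+2)) : x = 4*i-2 ∨ x = 4*i := by
  rw [edge_iff m _ _ hm] at h
  rcases h with ⟨i, h1, h2, h⟩ | ⟨i, h1, h2, h⟩ | h <;> omega

lemma from_d (m i x : ℕ) (hm : 1 ≤ m) (hi2 : i ≤ m)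
    (h : (4*i+1, x) ∈ evenEdges (2*m+2)) : x = 4*i+2 ∨ (1 ≤ i ∧ x = 4*i) := by
  rw [edge_iff m _ _ hm] at h
  rcases h with ⟨i, h1, h2, h⟩ | ⟨i, h1, h2, h⟩ | h <;> omega

lemma from_z (m x : ℕ) (hm : 1 ≤ m) 
    (h : (4*m+3, x) ∈ evenEdges (2*m+2)) : x = 4*m+2 := by
  rw [edge_iff m _ _ hm] at h
  rcases h with ⟨i, h1, h2, h⟩ | ⟨i, h1, h2, h⟩ | h <;> omega

/-! ### Consecutive vertices of a path -/

/-- `y` immediately follows `x` in `p`. -/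
def Nx {α : Type*} (p : List α) (x y : α) : Prop :=
  ∃ i, p[i]? = some x ∧ p[i+1]? = some y

lemma idx_inj {α : Type*} {p : List α} (hn : p.Nodup) {i j : ℕ} {x : α}
    (hi : p[i]? = some x) (hj : p[j]? = some x) : i = j := by
  obtain ⟨h1, h1'⟩ := List.getElem?_eq_some_iff.1 hi
  obtain ⟨h2, h2'⟩ := List.getElem?_eq_some_iff.1 hj
  exact (hn.getElem_inj_iff).1 (h1'.trans h2'.symm)

lemma Nx.right_unique {α : Type*} {p : List α} (hn : p.Nodup) {x y z : α}
    (h : Nx p x y) (h' : Nx p x z) : y = z := by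
  obtain ⟨i, hi, hi'⟩ := h
  obtain ⟨j, hj, hj'⟩ := h'
  obtain rfl := idx_inj hn hi hj
  simpa using hi'.symm.trans hj'

lemma Nx.left_unique {α : Type*} {p : List α} (hn : p.Nodup) {x y z : α}
    (h : Nx p x z) (h' : Nx p y z) : x = y := by
  obtain ⟨i, hi, hi'⟩ := h
  obtain ⟨j, hj, hj'⟩ := h'
  have := idx_inj hn hi' hj'
  obtain rfl : i = j := by omega
  simpa using hi.symm.trans hj

lemma Nx.not_symm {α : Type*} {p : List α} (hn : p.Nodup) {x y : α}
    (h : Nx p x y) (h' : Nx p y x) : False := by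
  obtain ⟨i, hi, hi'⟩ := h
  obtain ⟨j, hj, hj'⟩ := h'
  have := idx_inj hn hi' hj
  have := idx_inj hn hi hj'
  omega

lemma Nx.rel {α : Type*} {E : α → α → Prop} {p : List α} (hc : p.IsChain E) {x y : α}
    (h : Nx p x y) : E x y := by
  obtain ⟨i, hi, hi'⟩ := h
  obtain ⟨h1, rfl⟩ := List.getElem?_eq_some_iff.1 hi
  obtain ⟨h2, rfl⟩ := List.getElem?_eq_some_iff.1 hi'
  exact List.isChain_iff_getElem.1 hc i h2

lemma exists_prev {α : Type*} {p : List α} {u x : α} (hu : p.head? = some u)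
    (hx : x ∈ p) (hxu : x ≠ u) : ∃ w, Nx p w x := by
  obtain ⟨i, hi⟩ := List.mem_iff_getElem?.1 hx
  rw [List.head?_eq_getElem?] at hu
  rcases i with _ | i
  · rw [hi] at hu; simp at hu; exact absurd hu hxu
  · have h1 := (List.getElem?_eq_some_iff.1 hi).1
    exact ⟨p[i], i, by simp, hi⟩

lemma exists_next {α : Type*} {p : List α} {v x : α} (hv : p.getLast? = some v)
    (hx : x ∈ p) (hxv : x ≠ v) : ∃ w, Nx p x w := by
  obtain ⟨i, hi⟩ := List.mem_iff_getElem?.1 hx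
  rw [List.getLast?_eq_getElem?] at hv
  have h1 := (List.getElem?_eq_some_iff.1 hi).1
  by_cases h : i + 1 < p.length
  · exact ⟨p[i+1], i, hi, by simp⟩
  · have : i = p.length - 1 := by omega
    rw [← this, hi] at hv
    simp at hv; exact absurd hv hxv

lemma not_next_last {α : Type*} {p : List α} (hn : p.Nodup) {v x : α}
    (hv : p.getLast? = some v) (h : Nx p v x) : False := by
  obtain ⟨i, hi, hi'⟩ := h
  rw [List.getLast?_eq_getElem?] at hv
  have := idx_inj hn hv hi
  have h1 := (List.getElem?_eq_some_iff.1 hi').1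
  omega

lemma not_prev_head {α : Type*} {p : List α} (hn : p.Nodup) {u x : α}
    (hu : p.head? = some u) (h : Nx p x u) : False := by
  obtain ⟨i, hi, hi'⟩ := h
  rw [List.head?_eq_getElem?] at hu
  have := idx_inj hn hu hi'
  omega

lemma length_one {α : Type*} {p : List α} (hn : p.Nodup) {u : α}
    (hu : p.head? = some u) (hv : p.getLast? = some u) : p.length ≤ 1 := by
  rw [List.head?_eq_getElem?] at hu
  rw [List.getLast?_eq_getElem?] at hv
  have := idx_inj hn hu hv
  omega

lemma length_three {α : Type*} {p : List α} (hn : p.Nodup) {u v x : α}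
    (hu : p.head? = some u) (hv : p.getLast? = some v) (h1 : Nx p u x) (h2 : Nx p x v) :
    p.length ≤ 3 := by
  rw [List.head?_eq_getElem?] at hu
  rw [List.getLast?_eq_getElem?] at hv
  obtain ⟨i, hi, hi'⟩ := h1
  obtain ⟨j, hj, hj'⟩ := h2
  have := idx_inj hn hu hi
  have := idx_inj hn hi' hj
  have := idx_inj hn hv hj'
  omega

/-! ### Lower bound -/

lemma lower_bound {β : Type*} [DecidableEq β] (k : ℕ) (hk : 4 ≤ k) (E : β → β → Prop)
    (V : Finset β) (inc out : Fin k → β) (h : IsInOutGraph E V inc out) :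
    2 * k - 1 ≤ V.card := by
  obtain ⟨p, hn, hc, hu, hv, hm⟩ := (h.paired ⟨0, by omega⟩ ⟨0, by omega⟩).2 rfl
  have key : ∀ x y j m, Nx p x y → x = out m → y = inc j → False := by
    rintro x y j m ⟨i, hi, hi'⟩ hx hy
    subst hx hy
    have hl := (List.getElem?_eq_some_iff.1 hi').1
    have hne : p.take (i+1) ≠ p.drop (i+1) := by
      intro he
      have h1 : out m ∈ p.take (i+1) := by
        rw [List.mem_iff_getElem?]
        exact ⟨i, by rw [List.getElem?_take]; simp [hi]⟩
      have h2 := List.disjoint_take_drop hn (le_refl (i+1))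
      exact h2 h1 (he ▸ h1)
    have hdis := List.disjoint_take_drop hn (le_refl (i+1))
    apply h.single_visit
    refine ⟨{p.take (i+1), p.drop (i+1)}, ?_, ?_, ?_, ?_⟩
    · rw [Finset.card_pair hne]
    · intro q hq
      simp only [Finset.mem_insert, Finset.mem_singleton] at hq
      rcases hq with rfl | rfl
      · refine ⟨⟨?_, hn.sublist (List.take_sublist _ _), ?_, ?_⟩, ⟨⟨0, by omega⟩, ?_⟩, ⟨m, ?_⟩⟩
        · intro h0
          have := congrArg List.length h0
          rw [List.length_take, List.length_nil] at this; omega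
        · exact List.IsChain.take hc _
        · intro x hx; exact (hm x).1 (List.mem_of_mem_take hx)
        · rw [List.head?_take]; simpa using hu
        · rw [List.getLast?_take]; simp [hi]
      · refine ⟨⟨?_, hn.sublist (List.drop_sublist _ _), ?_, ?_⟩, ⟨j, ?_⟩, ⟨⟨0, by omega⟩, ?_⟩⟩
        · intro h0
          have := congrArg List.length h0
          simp at this; omega
        · exact List.IsChain.drop hc _
        · intro x hx; exact (hm x).1 (List.mem_of_mem_drop hx)
        · rw [List.head?_drop]; exact hi'
        · rw [List.getLast?_drop, if_neg (by omega)]; exact hv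
    · intro q hq r hr hqr x hx hx'
      simp only [Finset.mem_insert, Finset.mem_singleton] at hq hr
      rcases hq with rfl | rfl <;> rcases hr with rfl | rfl
      · exact hqr rfl
      · exact hdis hx hx'
      · exact hdis hx' hx
      · exact hqr rfl
    · intro x hx
      have := (hm x).2 hx
      rw [← List.take_append_drop (i+1) p, List.mem_append] at this
      simpa using this
  have hz : ∀ m : Fin k, ∃ y, m ≠ ⟨0, by omega⟩ → Nx p (out m) y := by
    intro m
    by_cases hm0 : m = ⟨0, by omega⟩
    · exact ⟨out m, fun h => absurd hm0 h⟩
    · obtain ⟨w, hw⟩ := exists_next hv ((hm _).2 (h.out_mem m)) (fun e => hm0 (h.out_inj e))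
      exact ⟨w, fun _ => hw⟩
  choose f hf using hz
  have c1 : (Finset.univ.image inc).card = k := by
    rw [Finset.card_image_of_injective _ h.inc_inj]; simp
  have c2 : (((Finset.univ : Finset (Fin k)).erase ⟨0, by omega⟩).image f).card = k - 1 := by
    rw [Finset.card_image_of_injOn, Finset.card_erase_of_mem (Finset.mem_univ _)]
    · simp
    · intro a ha b hb hab
      simp at ha hb
      have h1 := hf a ha
      have h2 := hf b hb
      rw [hab] at h1
      exact h.out_inj (h1.left_unique hn h2)
  have hd : Disjoint (Finset.univ.image inc)
      (((Finset.univ : Finset (Fin k)).erase ⟨0, by omega⟩).image f) := by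
    rw [Finset.disjoint_left]
    intro x hx hx'
    simp only [Finset.mem_image, Finset.mem_erase, Finset.mem_univ, true_and, and_true] at hx hx'
    obtain ⟨j, rfl⟩ := hx
    obtain ⟨m, hm0, hm1⟩ := hx'
    exact key _ _ j m (hf m hm0) rfl hm1
  have hs : (Finset.univ.image inc) ∪
      (((Finset.univ : Finset (Fin k)).erase ⟨0, by omega⟩).image f) ⊆ V := by
    intro x hx
    simp only [Finset.mem_union, Finset.mem_image, Finset.mem_erase, Finset.mem_univ, true_and,
      and_true] at hx
    rcases hx with ⟨j, rfl⟩ | ⟨m, hm0, rfl⟩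
    · exact h.inc_mem j
    · exact (h.edge_mem _ _ ((hf m hm0).rel hc)).2
  have := Finset.card_le_card hs
  rw [Finset.card_union_of_disjoint hd] at this
  omega

/-! ### Single visit condition, by parity -/

/-- Weight: `1` on odd vertices, `-1` on even vertices. -/
def wt (x : ℕ) : ℤ := if x % 2 = 1 then 1 else -1

lemma wt_path (p : List ℕ) (hc : p.IsChain (fun x y => (x + y) % 2 = 1)) (u v : ℕ)
    (hu : p.head? = some u) (hv : p.getLast? = some v) :
    2 * (p.map wt).sum = wt u + wt v := by
  induction p generalizing u with
  | nil => simp at hu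
  | cons a l ih =>
    simp at hu; subst hu
    rcases l with _ | ⟨b, l⟩
    · simp at hv; subst hv; simp; ring
    · rw [List.isChain_cons_cons] at hc
      have := ih hc.2 b rfl (by simpa using hv)
      rw [List.map_cons, List.sum_cons, mul_add, this]
      have h1 : wt b = - wt a := by
        unfold wt; have := hc.1; split_ifs <;> first | rfl | omega
      rw [h1]; ring

lemma wt_sum (n : ℕ) : ∑ x ∈ Finset.Icc 1 (2*n+1), wt x = 1 := by
  induction n with
  | zero => simp [wt]
  | succ n ih =>
    rw [show 2*(n+1)+1 = (2*n+1)+1+1 by ring, Finset.sum_Icc_succ_top (by omega),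
      Finset.sum_Icc_succ_top (by omega), ih]
    have h1 : wt (2*n+1+1) = -1 := by unfold wt; rw [if_neg (by omega)]
    have h2 : wt (2*n+1+1+1) = 1 := by unfold wt; rw [if_pos (by omega)]
    rw [h1, h2]; rfl

lemma single_visit_of_parity (n k : ℕ) (E : ℕ → ℕ → Prop) (inc out : Fin k → ℕ)
    (hE : ∀ x y, E x y → (x + y) % 2 = 1) (hi : ∀ j, inc j % 2 = 1) (ho : ∀ j, out j % 2 = 1) :
    SingleVisit E (Finset.Icc 1 (2*n+1)) inc out := by
  rintro ⟨P, hP, h1, h2, h3⟩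
  have hV : Finset.Icc 1 (2*n+1) = P.biUnion List.toFinset := by
    ext x
    simp only [Finset.mem_biUnion, List.mem_toFinset]
    constructor
    · exact h3 x
    · rintro ⟨p, hp, hx⟩
      exact (h1 p hp).1.2.2.2 x hx
  have hs := wt_sum n
  rw [hV, Finset.sum_biUnion] at hs
  · have : ∀ p ∈ P, ∑ x ∈ p.toFinset, wt x = 1 := by
      intro p hp
      obtain ⟨⟨_, hn, hc, _⟩, ⟨j, hj⟩, ⟨m, hm⟩⟩ := h1 p hp
      rw [List.sum_toFinset _ hn]
      change (p.map wt).sum = 1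
      have := wt_path p (List.IsChain.imp (fun a b => hE a b) hc) _ _ hj hm
      have e1 : wt (inc j) = 1 := if_pos (hi j)
      have e2 : wt (out m) = 1 := if_pos (ho m)
      omega
    rw [Finset.sum_congr rfl this] at hs
    simp at hs
    omega
  · intro p hp q hq hpq
    rw [Function.onFun, Finset.disjoint_left]
    intro x hx hx'
    exact h2 p hp q hq hpq x (List.mem_toFinset.1 hx) (List.mem_toFinset.1 hx')

/-! ### Endpoints of Hamiltonian paths -/

lemma ham_ends (m : ℕ) (hm : 1 ≤ m) (u v : ℕ) (hu2 : u % 2 = 1) (hv2 : v % 2 = 1) (p : List ℕ)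
    (h : IsHamPathOn (fun x y => (x, y) ∈ evenEdges (2*m+2)) (Finset.Icc 1 (4*m+3)) u v p) :
    ∃ j, j ≤ m ∧ (((j = 0 ∧ u = 1 ∨ 1 ≤ j ∧ u = 4*j-1) ∧ v = 4*j+3) ∨
      ((j = m ∧ u = 4*m+3 ∨ j < m ∧ u = 4*j+5) ∧ v = 4*j+1)) := by
  classical
  obtain ⟨hn, hch, hu, hv, hmem⟩ := h
  have hmem' : ∀ x, 1 ≤ x → x ≤ 4*m+3 → x ∈ p := fun x h1 h2 =>
    (hmem x).2 (Finset.mem_Icc.2 ⟨h1, h2⟩)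
  have hlen : p.length = 4*m+3 := by
    rw [← List.toFinset_card_of_nodup hn]
    have : p.toFinset = Finset.Icc 1 (4*m+3) := by ext x; simp only [List.mem_toFinset, hmem]
    rw [this]; simp
  have prev : ∀ x, 1 ≤ x → x ≤ 4*m+3 → x ≠ u →
      ∃ w, Nx p w x ∧ (w, x) ∈ evenEdges (2*m+2) := fun x h1 h2 h3 => by
    obtain ⟨w, hw⟩ := exists_prev hu (hmem' x h1 h2) h3
    exact ⟨w, hw, hw.rel hch⟩
  have next : ∀ x, 1 ≤ x → x ≤ 4*m+3 → x ≠ v →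
      ∃ w, Nx p x w ∧ (x, w) ∈ evenEdges (2*m+2) := fun x h1 h2 h3 => by
    obtain ⟨w, hw⟩ := exists_next hv (hmem' x h1 h2) h3
    exact ⟨w, hw, hw.rel hch⟩
  have ru : ∀ {x y z}, Nx p x y → Nx p x z → y = z := fun h h' => h.right_unique hn h'
  have lu : ∀ {x y z}, Nx p x z → Nx p y z → x = y := fun h h' => h.left_unique hn h'
  have ns : ∀ {x y}, Nx p x y → Nx p y x → False := fun h h' => h.not_symm hn h'
  set up : ℕ → Prop := fun i => Nx p (4*i-1) (4*i) ∧ Nx p (4*i) (4*i+1) with hup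
  have dich : ∀ i, 1 ≤ i → i ≤ m → ¬ up i → Nx p (4*i+1) (4*i) ∧ Nx p (4*i) (4*i-1) := by
    intro i h1 h2 hnu
    obtain ⟨w, hw, ew⟩ := prev (4*i) (by omega) (by omega) (by omega)
    obtain ⟨w', hw', ew'⟩ := next (4*i) (by omega) (by omega) (by omega)
    rcases into_c m i w hm h1 h2 ew with rfl | rfl <;>
      rcases from_c m i w' hm h1 h2 ew' with rfl | rfl
    · exact (ns hw hw').elim
    · exact absurd ⟨hw, hw'⟩ hnu
    · exact ⟨hw, hw'⟩
    · exact (ns hw hw').elim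
  have step : ∀ i, 1 ≤ i → i + 1 ≤ m → up (i+1) → up i := by
    intro i h1 h2 hu1
    by_contra hnu
    have hd := dich i h1 (by omega) hnu
    obtain ⟨w, hw, ew⟩ := next (4*i-2) (by omega) (by omega) (by omega)
    rcases from_a m i w hm h1 (by omega) ew with rfl | ⟨_, rfl⟩ | ⟨h, _⟩
    · have := lu hw hd.2; omega
    · have := lu hw hu1.2; omega
    · omega
  obtain ⟨j, hjm, hj1, hj2⟩ : ∃ j, j ≤ m ∧ (1 ≤ j → up j) ∧ ∀ i, j < i → i ≤ m → ¬ up i := by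
    refine ⟨Nat.findGreatest up m, Nat.findGreatest_le m, ?_, ?_⟩
    · intro h; exact Nat.findGreatest_of_ne_zero rfl (by omega)
    · intro i h1 h2; exact Nat.findGreatest_is_greatest h1 h2
  have hdn : j < m → Nx p (4*j+5) (4*j+4) ∧ Nx p (4*j+4) (4*j+3) := fun h =>
    dich (j+1) (by omega) (by omega) (hj2 _ (by omega) (by omega))
  have hU : (j = 0 ∧ u = 1 ∨ 1 ≤ j ∧ u = 4*j-1) ∨ (j = m ∧ u = 4*m+3 ∨ j < m ∧ u = 4*j+5) := by
    by_contra hcon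
    rcases Nat.eq_zero_or_pos j with h0 | h0
    · subst h0
      obtain ⟨w, hw, ew⟩ := prev 1 (by omega) (by omega) (by omega)
      obtain rfl := into_one m w hm ew
      obtain ⟨w', hw', ew'⟩ := prev 5 (by omega) (by omega) (by omega)
      rcases into_d m 1 w' hm (by omega) (by omega) ew' with rfl | ⟨_, rfl⟩ | ⟨h, _⟩
      · have := ru hw' (hdn (by omega)).2; omega
      · have := ru hw hw'; omega
      · omega
    · obtain ⟨w, hw, ew⟩ := prev (4*j-1) (by omega) (by omega) (by omega)
      rcases into_b m j w hm h0 hjm ew with rfl | rfl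
      · rcases Nat.lt_or_ge j m with hlt | hge
        · obtain ⟨w', hw', ew'⟩ := prev (4*(j+1)+1) (by omega) (by omega) (by omega)
          rcases into_d m (j+1) w' hm (by omega) (by omega) ew' with rfl | ⟨h, _⟩ | ⟨_, rfl⟩
          · have := ru hw' (hdn hlt).2; omega
          · omega
          · have e : 4*(j+1)-6 = 4*j-2 := by omega
            rw [e] at hw'
            have := ru hw hw'; omega
        · obtain rfl : j = m := by omega
          obtain ⟨w', hw', ew'⟩ := prev (4*j+3) (by omega) (by omega) (by omega)
          obtain rfl := into_z j w' hm ew'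
          have := ru hw hw'; omega
      · have := ru hw (hj1 h0).2; omega
  have hV : v = 4*j+1 ∨ v = 4*j+3 := by
    by_contra hcon
    obtain ⟨w, hw, ew⟩ := next (4*j+1) (by omega) (by omega) (by omega)
    obtain ⟨w', hw', ew'⟩ := next (4*j+3) (by omega) (by omega) (by omega)
    rcases from_d m j w hm hjm ew with rfl | ⟨h0, rfl⟩
    · rcases Nat.lt_or_ge j m with hlt | hge
      · rcases from_b m (j+1) w' hm (by omega) (by omega) ew' with rfl | rfl
        · have := lu hw hw'; omega
        · have := lu hw' (hdn hlt).1; omega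
      · obtain rfl : j = m := by omega
        obtain rfl := from_z j w' hm ew'
        have := lu hw hw'; omega
    · have := lu hw (hj1 h0).1; omega
  refine ⟨j, hjm, ?_⟩
  rcases hU with hU | hU <;> rcases hV with hV | hV
  · exfalso
    rcases hU with ⟨h0, hU⟩ | ⟨h0, hU⟩
    · have : u = v := by omega
      subst this
      have := length_one hn hu hv; omega
    · subst hU hV
      have := length_three hn hu hv (hj1 h0).1 (hj1 h0).2; omega
  · left; exact ⟨hU, hV⟩
  · right; exact ⟨hU, hV⟩
  · exfalso
    rcases hU with ⟨h0, hU⟩ | ⟨h0, hU⟩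
    · have : u = v := by omega
      subst this
      have := length_one hn hu hv; omega
    · subst hU hV
      have := length_three hn hu hv (hdn h0).1 (hdn h0).2; omega

/-! ### Construction of Hamiltonian paths -/

/-- The blocks `i, …, i+n-1`, each traversed downwards. -/
def dnBlocks : ℕ → ℕ → List ℕ
  | _, 0 => []
  | i, n+1 => (4*i+1) :: (4*i) :: (4*i-1) :: (4*i-2) :: dnBlocks (i+1) n

lemma mem_dnBlocks (i n x : ℕ) (hi : 1 ≤ i) :
    x ∈ dnBlocks i n ↔ 4*i-2 ≤ x ∧ x + 3 ≤ 4*(i+n) := by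
  induction n generalizing i with
  | zero => simp [dnBlocks]; omega
  | succ n ih =>
    simp only [dnBlocks, List.mem_cons, ih (i+1) (by omega)]
    omega

lemma nodup_dnBlocks (i n : ℕ) (hi : 1 ≤ i) : (dnBlocks i n).Nodup := by
  induction n generalizing i with
  | zero => simp [dnBlocks]
  | succ n ih =>
    simp only [dnBlocks, List.nodup_cons, List.mem_cons, mem_dnBlocks (i+1) n _ (by omega)]
    refine ⟨by omega, by omega, by omega, by omega, ih (i+1) (by omega)⟩

lemma chain_dnBlocks (m : ℕ) (hm : 1 ≤ m) (i n : ℕ) (hi : 1 ≤ i) (hin : i + n = m) (l : List ℕ)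
    (hl : (((4*m+3) :: l).IsChain (fun x y => (x, y) ∈ evenEdges (2*m+2)))) :
    ((4*i-2) :: (dnBlocks (i+1) n ++ (4*m+3) :: l)).IsChain
      (fun x y => (x, y) ∈ evenEdges (2*m+2)) := by
  induction n generalizing i with
  | zero =>
    simp only [dnBlocks, List.nil_append, List.isChain_cons_cons]
    exact ⟨edge_misc m _ _ hm (by omega), hl⟩
  | succ n ih =>
    simp only [dnBlocks, List.cons_append, List.isChain_cons_cons]
    exact ⟨edge_skip m i _ _ hm hi (by omega) (by omega),
      edge_down m (i+1) _ _ hm (by omega) (by omega) (by omega),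
      edge_down m (i+1) _ _ hm (by omega) (by omega) (by omega),
      edge_down m (i+1) _ _ hm (by omega) (by omega) (by omega),
      ih (i+1) (by omega) (by omega)⟩

/-- Increasing run `1, …, n`, followed by `l`. -/
lemma chain_up (m : ℕ) (hm : 1 ≤ m) (s n : ℕ) (hs : 1 ≤ s) (hn : s + n ≤ 4*m+2) (l : List ℕ)
    (hl : ((s+n) :: l).IsChain (fun x y => (x, y) ∈ evenEdges (2*m+2))) :
    (List.range' s (n+1) ++ l).IsChain (fun x y => (x, y) ∈ evenEdges (2*m+2)) := by
  induction n generalizing s with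
  | zero => simpa using hl
  | succ n ih =>
    rw [List.range'_succ, List.range'_succ, List.cons_append, List.cons_append,
      List.isChain_cons_cons]
    refine ⟨edge_up m s hm hs (by omega), ?_⟩
    have := ih (s+1) (by omega) (by omega) (by rwa [show s+1+n = s+(n+1) by ring])
    rwa [List.range'_succ] at this

/-- Prepending an edge to an increasing run starting at `1`. -/
lemma chain_y_up (m : ℕ) (hm : 1 ≤ m) (n : ℕ) (hn : 1 + n ≤ 4*m+2) (l : List ℕ)
    (hl : ((1+n) :: l).IsChain (fun x y => (x, y) ∈ evenEdges (2*m+2))) :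
    ((4*m+2) :: (List.range' 1 (n+1) ++ l)).IsChain
      (fun x y => (x, y) ∈ evenEdges (2*m+2)) := by
  have := chain_up m hm 1 n le_rfl hn l hl
  rw [List.range'_succ, List.cons_append] at this ⊢
  rw [List.isChain_cons_cons]
  exact ⟨edge_misc m _ _ hm (by omega), this⟩

/-- Case of a start at `d_{j+1}`. -/
lemma ham_d (m : ℕ) (hm : 1 ≤ m) (j : ℕ) (hj : j < m) :
    ∃ p, IsHamPathOn (fun x y => (x, y) ∈ evenEdges (2*m+2)) (Finset.Icc 1 (4*m+3))
      (4*j+5) (4*j+1) p := by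
  refine ⟨(4*j+5) :: (4*j+4) :: (4*j+3) :: (4*(j+1)-2) :: (dnBlocks (j+1+1) (m-(j+1)) ++
    (4*m+3) :: (4*m+2) :: (List.range' 1 (4*j+1) ++ [])), ?_, ?_, rfl, ?_, ?_⟩
  · simp only [List.nodup_cons, List.nodup_append, List.mem_append, List.mem_cons,
      mem_dnBlocks _ _ _ (show 1 ≤ j+1+1 by omega), List.mem_range'_1, List.append_nil]
    refine ⟨by omega, by omega, by omega, by omega, nodup_dnBlocks _ _ (by omega),
      ⟨by omega, by omega, List.nodup_range'⟩, by omega⟩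
  · have h1 := chain_y_up m hm (4*j) (by omega) [] (by simp)
    have h2 := chain_dnBlocks m hm (j+1) (m-(j+1)) (by omega) (by omega) _
      (List.isChain_cons_cons.2 ⟨edge_misc m (4*m+3) (4*m+2) hm (by omega), h1⟩)
    refine List.isChain_cons_cons.2 ⟨edge_down m (j+1) _ _ hm (by omega) (by omega) (by omega), ?_⟩
    refine List.isChain_cons_cons.2 ⟨edge_down m (j+1) _ _ hm (by omega) (by omega) (by omega), ?_⟩
    exact List.isChain_cons_cons.2 ⟨edge_down m (j+1) _ _ hm (by omega) (by omega) (by omega), h2⟩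
  · simp [List.getLast?_cons, List.getLast?_append, List.getLast?_range']
  · intro x
    simp only [List.mem_append, List.mem_cons,
      mem_dnBlocks _ _ _ (show 1 ≤ j+1+1 by omega), List.mem_range'_1, List.append_nil,
      Finset.mem_Icc]
    omega

/-- Case of a start at the last vertex. -/
lemma ham_z (m : ℕ) (hm : 1 ≤ m) :
    ∃ p, IsHamPathOn (fun x y => (x, y) ∈ evenEdges (2*m+2)) (Finset.Icc 1 (4*m+3))
      (4*m+3) (4*m+1) p := by
  refine ⟨(4*m+3) :: (4*m+2) :: (List.range' 1 (4*m+1) ++ []), ?_, ?_, rfl, ?_, ?_⟩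
  · simp only [List.nodup_cons, List.mem_cons, List.mem_range'_1, List.append_nil]
    refine ⟨by omega, by omega, List.nodup_range'⟩
  · have h1 := chain_y_up m hm (4*m) (by omega) [] (by simp)
    exact List.isChain_cons_cons.2 ⟨edge_misc m (4*m+3) (4*m+2) hm (by omega), h1⟩
  · simp [List.getLast?_cons, List.getLast?_range']
  · intro x
    simp only [List.mem_cons, List.mem_range'_1, List.append_nil, Finset.mem_Icc]
    omega

/-- Case of a start at `1`. -/
lemma ham_one (m : ℕ) (hm : 1 ≤ m) :
    ∃ p, IsHamPathOn (fun x y => (x, y) ∈ evenEdges (2*m+2)) (Finset.Icc 1 (4*m+3)) 1 3 p := by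
  refine ⟨1 :: (4*1-2) :: (dnBlocks (1+1) (m-1) ++ (4*m+3) :: [4*m+2, 5, 4, 3]),
    ?_, ?_, rfl, ?_, ?_⟩
  · simp only [List.nodup_cons, List.nodup_append, List.mem_append, List.mem_cons,
      mem_dnBlocks _ _ _ (show 1 ≤ 1+1 by omega), List.not_mem_nil, or_false, List.nodup_nil]
    refine ⟨by omega, by omega, nodup_dnBlocks _ _ (by omega),
      ⟨by omega, by omega, by omega, by omega, by simp, trivial⟩, by omega⟩
  · have h2 := chain_dnBlocks m hm 1 (m-1) (by omega) (by omega) [4*m+2, 5, 4, 3] (by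
      simp only [List.isChain_cons_cons, List.isChain_singleton, and_true]
      exact ⟨edge_misc m _ _ hm (by omega), edge_misc m _ _ hm (by omega),
        edge_down m 1 _ _ hm (by omega) (by omega) (by omega),
        edge_down m 1 _ _ hm (by omega) (by omega) (by omega)⟩)
    exact List.isChain_cons_cons.2 ⟨edge_up m 1 hm (by omega) (by omega), h2⟩
  · simp [List.getLast?_cons, List.getLast?_append]
  · intro x
    simp only [List.mem_append, List.mem_cons, List.not_mem_nil, or_false,
      mem_dnBlocks _ _ _ (show 1 ≤ 1+1 by omega), Finset.mem_Icc]
    omega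

/-- Case of a start at `b_j`, `1 ≤ j < m`. -/
lemma ham_b (m : ℕ) (hm : 1 ≤ m) (j : ℕ) (h0 : 1 ≤ j) (hj : j < m) :
    ∃ p, IsHamPathOn (fun x y => (x, y) ∈ evenEdges (2*m+2)) (Finset.Icc 1 (4*m+3))
      (4*j-1) (4*j+3) p := by
  refine ⟨(4*j-1) :: (4*j) :: (4*j+1) :: (4*(j+1)-2) :: (dnBlocks (j+1+1) (m-(j+1)) ++
    (4*m+3) :: (4*m+2) :: (List.range' 1 (4*j-3+1) ++ [4*j+5, 4*j+4, 4*j+3])),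
    ?_, ?_, rfl, ?_, ?_⟩
  · simp only [List.nodup_cons, List.nodup_append, List.mem_append, List.mem_cons,
      mem_dnBlocks _ _ _ (show 1 ≤ j+1+1 by omega), List.mem_range'_1, List.not_mem_nil, or_false,
      List.nodup_nil]
    refine ⟨by omega, by omega, by omega, by omega, nodup_dnBlocks _ _ (by omega),
      ⟨by omega, by omega, List.nodup_range', ⟨by omega, by omega, by simp, trivial⟩, by omega⟩,
      by omega⟩
  · have h1 := chain_y_up m hm (4*j-3) (by omega) [4*j+5, 4*j+4, 4*j+3] (by
      simp only [List.isChain_cons_cons, List.isChain_singleton, and_true]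
      exact ⟨edge_skip m j _ _ hm (by omega) (by omega) (by omega),
        edge_down m (j+1) _ _ hm (by omega) (by omega) (by omega),
        edge_down m (j+1) _ _ hm (by omega) (by omega) (by omega)⟩)
    have h2 := chain_dnBlocks m hm (j+1) (m-(j+1)) (by omega) (by omega) _
      (List.isChain_cons_cons.2 ⟨edge_misc m (4*m+3) (4*m+2) hm (by omega), h1⟩)
    have e1 := edge_up m (4*j-1) hm (by omega) (by omega)
    have e2 := edge_up m (4*j) hm (by omega) (by omega)
    have e3 := edge_up m (4*j+1) hm (by omega) (by omega)
    rw [show 4*j-1+1 = 4*j by omega] at e1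
    rw [show 4*j+1+1 = 4*(j+1)-2 by omega] at e3
    exact List.isChain_cons_cons.2 ⟨e1, List.isChain_cons_cons.2 ⟨e2,
      List.isChain_cons_cons.2 ⟨e3, h2⟩⟩⟩
  · simp [List.getLast?_cons, List.getLast?_append]
  · intro x
    simp only [List.mem_append, List.mem_cons, List.not_mem_nil, or_false,
      mem_dnBlocks _ _ _ (show 1 ≤ j+1+1 by omega), List.mem_range'_1, Finset.mem_Icc]
    omega

/-- Case of a start at `b_m`. -/
lemma ham_bm (m : ℕ) (hm : 1 ≤ m) :
    ∃ p, IsHamPathOn (fun x y => (x, y) ∈ evenEdges (2*m+2)) (Finset.Icc 1 (4*m+3))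
      (4*m-1) (4*m+3) p := by
  refine ⟨(4*m-1) :: (4*m) :: (4*m+1) :: (4*m+2) :: (List.range' 1 (4*m-3+1) ++ [4*m+3]),
    ?_, ?_, rfl, ?_, ?_⟩
  · simp only [List.nodup_cons, List.nodup_append, List.mem_append, List.mem_cons,
      List.mem_range'_1, List.not_mem_nil, or_false, List.nodup_nil]
    refine ⟨by omega, by omega, by omega, by omega, List.nodup_range', ⟨by simp, trivial⟩,
      by omega⟩
  · have h1 := chain_y_up m hm (4*m-3) (by omega) [4*m+3] (by
      simp only [List.isChain_cons_cons, List.isChain_singleton, and_true]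
      exact edge_misc m _ _ hm (by omega))
    have e1 := edge_up m (4*m-1) hm (by omega) (by omega)
    have e2 := edge_up m (4*m) hm (by omega) (by omega)
    have e3 := edge_up m (4*m+1) hm (by omega) (by omega)
    rw [show 4*m-1+1 = 4*m by omega] at e1
    exact List.isChain_cons_cons.2 ⟨e1, List.isChain_cons_cons.2 ⟨e2,
      List.isChain_cons_cons.2 ⟨e3, h1⟩⟩⟩
  · simp [List.getLast?_cons, List.getLast?_append]
  · intro x
    simp only [List.mem_append, List.mem_cons, List.not_mem_nil, or_false,
      List.mem_range'_1, Finset.mem_Icc]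
    omega

/-! ### The outgoing vertices -/

lemma evenOut_spec (m n : ℕ) (hm : 1 ≤ m) (h1 : 1 ≤ n) (h2 : n ≤ 2*m+2) :
    (n = 1 ∧ evenOut (2*m+2) n = 3) ∨ (n = 2*m+2 ∧ evenOut (2*m+2) n = 4*m+1) ∨
    (n % 2 = 0 ∧ n ≤ 2*m ∧ evenOut (2*m+2) n = 2*n+3) ∨
    (n % 2 = 1 ∧ 3 ≤ n ∧ evenOut (2*m+2) n = 2*n-5) := by
  unfold evenOut
  simp only [Nat.even_iff]
  split_ifs <;> omega

/-- for even `k ≥ 4`, the digraph `S_k` with incoming vertices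
`i_j = 2j - 1` and outgoing vertices `o_j` is a `k`-in-out graph, it has exactly
`2k - 1` vertices, and `2k - 1` is the minimum possible number of vertices of a
`k`-in-out graph. -/
theorem evenSk_isInOut_optimal (k : ℕ) (hk : 4 ≤ k) (hke : Even k) :
    IsInOutGraph (fun x y => (x, y) ∈ evenEdges k) (Finset.Icc 1 (2 * k - 1))
      (fun j : Fin k => 2 * (j : ℕ) + 1) (fun j : Fin k => evenOut k ((j : ℕ) + 1)) ∧
    (Finset.Icc 1 (2 * k - 1)).card = 2 * k - 1 ∧
    ∀ {β : Type} [DecidableEq β] (E' : β → β → Prop) (Vset' : Finset β)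
      (inc' out' : Fin k → β), IsInOutGraph E' Vset' inc' out' →
        2 * k - 1 ≤ Vset'.card := by
  obtain ⟨m, rfl⟩ : ∃ m, k = 2*m+2 := by
    obtain ⟨r, hr⟩ := hke
    exact ⟨r-1, by omega⟩
  have hm : 1 ≤ m := by omega
  have hV : 2*(2*m+2)-1 = 4*m+3 := by omega
  have hV' : 2*(2*m+2)-1 = 2*(2*m+1)+1 := by omega
  refine ⟨⟨?_, ?_, ?_, ?_, ?_, ?_, ?_, ?_⟩, by simp, ?_⟩
  · intro x hx
    have := edge_parity m x x hm hx
    omega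
  · intro x y hx
    have := edge_parity m x y hm hx
    simp only [Finset.mem_Icc]
    omega
  · intro j
    have := j.2
    simp only [Finset.mem_Icc]
    omega
  · intro j
    have := evenOut_spec m (j+1) hm (by omega) (by omega)
    simp only [Finset.mem_Icc]
    omega
  · intro a b hab
    apply Fin.ext
    simp only at hab
    omega
  · intro a b hab
    have h1 := evenOut_spec m (a+1) hm (by omega) (by omega)
    have h2 := evenOut_spec m (b+1) hm (by omega) (by omega)
    apply Fin.ext
    simp only at hab
    omega
  · intro a b
    rw [hV]
    have h2 := evenOut_spec m (b+1) hm (by omega) (by omega)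
    constructor
    · rintro ⟨p, hp⟩
      obtain ⟨j, hj, hj'⟩ := ham_ends m hm _ _ (by omega) (by omega) p hp
      apply Fin.ext
      have := a.2
      omega
    · rintro rfl
      rcases h2 with ⟨e, h2⟩ | ⟨e, h2⟩ | ⟨e, e', h2⟩ | ⟨e, e', h2⟩
      · have := ham_one m hm
        rw [h2, show 2*(a:ℕ)+1 = 1 by omega]; exact this
      · have := ham_z m hm
        rw [h2, show 2*(a:ℕ)+1 = 4*m+3 by omega]; exact this
      · obtain ⟨j, hj⟩ : ∃ j, (a:ℕ) + 1 = 2*j := ⟨((a:ℕ)+1)/2, by omega⟩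
        rw [h2, show 2*(a:ℕ)+1 = 4*j-1 by omega, show 2*((a:ℕ)+1)+3 = 4*j+3 by omega]
        rcases Nat.lt_or_ge j m with hlt | hge
        · exact ham_b m hm j (by omega) hlt
        · obtain rfl : j = m := by omega
          exact ham_bm j hm
      · obtain ⟨j, hj⟩ : ∃ j, (a:ℕ) + 1 = 2*j+3 := ⟨((a:ℕ)-2)/2, by omega⟩
        rw [h2, show 2*(a:ℕ)+1 = 4*j+5 by omega, show 2*((a:ℕ)+1)-5 = 4*j+1 by omega]
        exact ham_d m hm j (by omega)
  · rw [hV']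
    apply single_visit_of_parity
    · intro x y hx; exact (edge_parity m x y hm hx).1
    · intro j; omega
    · intro j
      have := evenOut_spec m (j+1) hm (by omega) (by omega)
      omega
  · intro β _ E' V' inc' out' h
    exact lower_bound _ hk E' V' inc' out' h
end

section
/- For every odd integer k ≥ 5, the digraph S_k with incoming vertices i_1,…,i_k and outgoing vertices o_1,…,o_k is a k-in-out graph, and it has exactly 2k−1 vertices, which is the minimum possible number of vertices for a k-in-out graph. -/
/-- The directed edge set of the graph `S_k` for odd `k ≥ 5`. -/
def oddEdges (k : ℕ) : Finset (ℕ × ℕ) :=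
  ((Finset.Icc 1 ((k - 1) / 2)).biUnion fun i =>
      {(4*i-2, 4*i-1), (4*i-1, 4*i-2), (4*i-1, 4*i), (4*i, 4*i-1),
        (4*i, 4*i+1), (4*i+1, 4*i)}) ∪
  ((Finset.Icc 1 ((k - 3) / 2)).biUnion fun i => {(4*i-2, 4*i+5), (4*i+1, 4*i+2)}) ∪
  ({(1, 2), (2*k-4, 1), (2*k-2, 5)} : Finset (ℕ × ℕ))

/-- The `m`-th outgoing vertex `o_m` (with `1 ≤ m ≤ k`) of `S_k` for odd `k ≥ 5`:
`o_1 = 2k-1`, `o_{k-1} = 3`, `o_k = 2k-5`, and otherwise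
`o_{2j} = 4j+3` and `o_{2j+1} = 4j-3`. -/
def oddOut (k m : ℕ) : ℕ :=
  if m = 1 then 2*k - 1
  else if m = k - 1 then 3
  else if m = k then 2*k - 5
  else if Even m then 2*m + 3
  else 2*m - 5

/-- `y` directly follows `x` in the list `p`. -/
def NextIn {α : Type*} (p : List α) (x y : α) : Prop :=
  ∃ t, p[t]? = some x ∧ p[t+1]? = some y

theorem getElem?_inj_of_nodup {α : Type*} {p : List α} (h : p.Nodup) {s t : ℕ} {x : α}
    (hs : p[s]? = some x) (ht : p[t]? = some x) : s = t := by
  obtain ⟨h1, h2⟩ := List.getElem?_eq_some_iff.1 hs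
  obtain ⟨h3, h4⟩ := List.getElem?_eq_some_iff.1 ht
  exact (h.getElem_inj_iff).1 (h2.trans h4.symm)

section ham
variable {α : Type*} {E : α → α → Prop} {V : Finset α} {u v : α} {p : List α}

theorem ham_head (hp : IsHamPathOn E V u v p) : p[0]? = some u := by
  rw [← List.head?_eq_getElem?]; exact hp.2.2.1

theorem ham_last (hp : IsHamPathOn E V u v p) : p[p.length - 1]? = some v := by
  rw [← List.getLast?_eq_getElem?]; exact hp.2.2.2.1

theorem ham_length [DecidableEq α] (hp : IsHamPathOn E V u v p) : p.length = V.card := by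
  rw [← List.toFinset_card_of_nodup hp.1]
  congr 1
  ext x; simp [hp.2.2.2.2 x]

theorem next_edge (hp : IsHamPathOn E V u v p) {x y : α} (h : NextIn p x y) : E x y := by
  obtain ⟨t, h1, h2⟩ := h
  obtain ⟨h3, h4⟩ := List.getElem?_eq_some_iff.1 h1
  obtain ⟨h5, h6⟩ := List.getElem?_eq_some_iff.1 h2
  have := (List.isChain_iff_getElem.1 hp.2.1) t h5
  rw [h4, h6] at this
  exact this

theorem next_func (hp : IsHamPathOn E V u v p) {x y z : α} (h : NextIn p x y)
    (h' : NextIn p x z) : y = z := by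
  obtain ⟨t, h1, h2⟩ := h
  obtain ⟨s, h3, h4⟩ := h'
  have := getElem?_inj_of_nodup hp.1 h1 h3
  subst this
  rw [h2] at h4
  exact Option.some.inj h4

theorem next_inj (hp : IsHamPathOn E V u v p) {x y z : α} (h : NextIn p x z)
    (h' : NextIn p y z) : x = y := by
  obtain ⟨t, h1, h2⟩ := h
  obtain ⟨s, h3, h4⟩ := h'
  have := getElem?_inj_of_nodup hp.1 h2 h4
  have : t = s := by omega
  subst this
  rw [h1] at h3
  exact Option.some.inj h3

theorem next_exists (hp : IsHamPathOn E V u v p) {x : α} (hx : x ∈ V) (hv : x ≠ v) :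
    ∃ y, NextIn p x y := by
  obtain ⟨t, ht, h1⟩ := List.getElem_of_mem ((hp.2.2.2.2 x).2 hx)
  have h2 : p[t]? = some x := List.getElem?_eq_some_iff.2 ⟨ht, h1⟩
  by_cases h : t + 1 < p.length
  · exact ⟨p[t+1], t, h2, List.getElem?_eq_getElem h⟩
  · have h3 := ham_last hp
    have : p.length - 1 = t := by omega
    rw [this, h2] at h3
    exact absurd (Option.some.inj h3) hv

theorem prev_exists (hp : IsHamPathOn E V u v p) {x : α} (hx : x ∈ V) (hu : x ≠ u) :
    ∃ y, NextIn p y x := by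
  obtain ⟨t, ht, h1⟩ := List.getElem_of_mem ((hp.2.2.2.2 x).2 hx)
  have h2 : p[t]? = some x := List.getElem?_eq_some_iff.2 ⟨ht, h1⟩
  rcases t with _ | t
  · rw [ham_head hp] at h2
    exact absurd (Option.some.inj h2).symm hu
  · exact ⟨p[t], t, List.getElem?_eq_getElem (by omega), h2⟩

theorem next_irrefl2 (hp : IsHamPathOn E V u v p) {x y : α} (h : NextIn p x y)
    (h' : NextIn p y x) : False := by
  obtain ⟨t, h1, h2⟩ := h
  obtain ⟨s, h3, h4⟩ := h'
  have := getElem?_inj_of_nodup hp.1 h1 h4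
  have := getElem?_inj_of_nodup hp.1 h2 h3
  omega

theorem next_short [DecidableEq α] (hp : IsHamPathOn E V u v p) {x : α} (h : NextIn p u x)
    (h' : NextIn p x v) : V.card ≤ 3 := by
  obtain ⟨t, h1, h2⟩ := h
  obtain ⟨s, h3, h4⟩ := h'
  have e1 := getElem?_inj_of_nodup hp.1 h1 (ham_head hp)
  have e2 := getElem?_inj_of_nodup hp.1 h2 h3
  have e3 := getElem?_inj_of_nodup hp.1 h4 (ham_last hp)
  rw [← ham_length hp]
  omega

end ham

/-- The lower bound. -/
theorem inOut_lower {β : Type*} [DecidableEq β] {k : ℕ} (hk : 1 ≤ k) (E : β → β → Prop)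
    (V : Finset β) (inc out : Fin k → β) (H : IsInOutGraph E V inc out) :
    2 * k - 1 ≤ V.card := by
  let j0 : Fin k := ⟨0, hk⟩
  obtain ⟨p, hp⟩ := (H.paired j0 j0).2 rfl
  have hex : ∀ m : {m : Fin k // m ≠ j0}, ∃ y, NextIn p y (inc m.1) := fun m =>
    prev_exists hp (H.inc_mem _) (fun h => m.2 (H.inc_inj h))
  choose y hy using hex
  have hyinj : Function.Injective y := by
    intro m m' h
    have h1 := hy m
    rw [h] at h1
    exact Subtype.ext (H.inc_inj (next_func hp h1 (hy m')))
  have hcut : ∀ m m', y m ≠ out m' := by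
    intro m m' h
    apply H.single_visit
    obtain ⟨t, h1, h2⟩ := hy m
    obtain ⟨h3, h4⟩ := List.getElem?_eq_some_iff.1 h2
    have hd : List.Disjoint (p.take (t+1)) (p.drop (t+1)) :=
      List.disjoint_take_drop hp.1 le_rfl
    have hmem : ∀ x, x ∈ p ↔ x ∈ p.take (t+1) ∨ x ∈ p.drop (t+1) := by
      intro x
      rw [← List.mem_append, List.take_append_drop]
    have hne : p.take (t+1) ≠ p.drop (t+1) := by
      intro e
      have hx : p[t+1] ∈ p.drop (t+1) := by
        rw [List.mem_drop_iff_getElem]; exact ⟨0, by omega, by simp⟩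
      exact hd (e ▸ hx) hx
    refine ⟨{p.take (t+1), p.drop (t+1)}, ?_, ?_, ?_, ?_⟩
    · rw [Finset.card_pair hne]
    · intro q hq
      rw [Finset.mem_insert, Finset.mem_singleton] at hq
      rcases hq with rfl | rfl
      · refine ⟨⟨?_, hp.1.sublist (List.take_sublist _ _), hp.2.1.take _, ?_⟩, ⟨j0, ?_⟩, m', ?_⟩
        · intro e
          have := congrArg List.length e
          simp at this
          subst this
          simp at h3
        · intro x hx
          exact (hp.2.2.2.2 x).1 ((hmem x).2 (Or.inl hx))
        · rw [List.head?_take]; simpa using hp.2.2.1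
        · rw [List.getLast?_take]; simp [h1, h]
      · refine ⟨⟨?_, hp.1.sublist (List.drop_sublist _ _), hp.2.1.drop _, ?_⟩, ⟨m.1, ?_⟩, j0, ?_⟩
        · intro e
          have := congrArg List.length e
          simp at this
          omega
        · intro x hx
          exact (hp.2.2.2.2 x).1 ((hmem x).2 (Or.inr hx))
        · rw [List.head?_drop]; exact h2
        · rw [List.getLast?_drop, if_neg (by omega)]; exact hp.2.2.2.1
    · intro q hq q' hq' hqq x hx hx'
      simp only [Finset.mem_insert, Finset.mem_singleton] at hq hq'
      rcases hq with rfl | rfl <;> rcases hq' with rfl | rfl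
      · exact hqq rfl
      · exact hd hx hx'
      · exact hd hx' hx
      · exact hqq rfl
    · intro x hx
      rcases (hmem x).1 ((hp.2.2.2.2 x).2 hx) with h | h
      · exact ⟨_, by simp, h⟩
      · exact ⟨_, by simp, h⟩
  have hdis : Disjoint (Finset.univ.image y) (Finset.univ.image out) := by
    rw [Finset.disjoint_left]
    intro a ha hb
    obtain ⟨m, -, rfl⟩ := Finset.mem_image.1 ha
    obtain ⟨m', -, h⟩ := Finset.mem_image.1 hb
    exact hcut m m' h.symm
  have hsub : Finset.univ.image y ∪ Finset.univ.image out ⊆ V := by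
    intro a ha
    rcases Finset.mem_union.1 ha with ha | ha
    · obtain ⟨m, -, rfl⟩ := Finset.mem_image.1 ha
      exact (H.edge_mem _ _ (next_edge hp (hy m))).1
    · obtain ⟨m, -, rfl⟩ := Finset.mem_image.1 ha
      exact H.out_mem m
  have hc := Finset.card_le_card hsub
  rw [Finset.card_union_of_disjoint hdis, Finset.card_image_of_injective _ hyinj,
    Finset.card_image_of_injective _ H.out_inj] at hc
  simp [Fintype.card_subtype_compl] at hc
  omega

/-- Arithmetic description of the edges, `k = 2 K + 1`. -/
theorem mem_oddEdges (K : ℕ) (hK : 2 ≤ K) (x y : ℕ) : (x, y) ∈ oddEdges (2*K+1) ↔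
    (1 ≤ x ∧ y = x+1 ∧ y ≤ 4*K+1) ∨ (3 ≤ x ∧ x ≤ 4*K+1 ∧ x % 4 ≠ 2 ∧ x = y+1) ∨
    (x % 4 = 2 ∧ y = x+7 ∧ y ≤ 4*K+1) ∨ (x = 4*K-2 ∧ y = 1) ∨ (x = 4*K ∧ y = 5) := by
  have e1 : (2*K+1-1)/2 = K := by omega
  have e2 : (2*K+1-3)/2 = K-1 := by omega
  simp only [oddEdges, e1, e2, Finset.mem_union, Finset.mem_biUnion, Finset.mem_insert,
    Finset.mem_singleton, Prod.mk.injEq, Finset.mem_Icc]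
  constructor
  · rintro ((⟨i, hi, h⟩ | ⟨i, hi, h⟩) | h)
    · rcases h with h | h | h | h | h | h
      · left; omega
      · right; left; omega
      · left; omega
      · right; left; omega
      · left; omega
      · right; left; omega
    · rcases h with h | h
      · right; right; left; omega
      · left; omega
    · rcases h with h | h | h
      · left; omega
      · right; right; right; left; omega
      · right; right; right; right; omega
  · rintro (h | h | h | h | h)
    · by_cases h1 : x = 1
      · right; omega
      · by_cases h2 : x % 4 = 1
        · left; right; exact ⟨x/4, by omega, by omega⟩
        · left; left
          refine ⟨(x+2)/4, by omega, ?_⟩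
          have h3 : x % 4 = 2 ∨ x % 4 = 3 ∨ x % 4 = 0 := by omega
          rcases h3 with h3 | h3 | h3
          · left; omega
          · right; right; left; omega
          · right; right; right; right; left; omega
    · left; left
      refine ⟨(x+2)/4, by omega, ?_⟩
      have h3 : x % 4 = 1 ∨ x % 4 = 3 ∨ x % 4 = 0 := by omega
      rcases h3 with h3 | h3 | h3
      · right; right; right; right; right; omega
      · right; left; omega
      · right; right; right; left; omega
    · left; right; exact ⟨(x+2)/4, by omega, by omega⟩
    · right; omega
    · right; omega

/-- The arithmetic edge relation. -/
def SE (K x y : ℕ) : Prop :=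
    (1 ≤ x ∧ y = x+1 ∧ y ≤ 4*K+1) ∨ (3 ≤ x ∧ x ≤ 4*K+1 ∧ x % 4 ≠ 2 ∧ x = y+1) ∨
    (x % 4 = 2 ∧ y = x+7 ∧ y ≤ 4*K+1) ∨ (x = 4*K-2 ∧ y = 1) ∨ (x = 4*K ∧ y = 5)

/-- Single visit via the bipartition into odd and even vertices. -/
theorem weight_path {E : ℕ → ℕ → Prop} (hE : ∀ x y, E x y → (x % 2 = 1 ↔ y % 2 = 0)) :
    ∀ (p : List ℕ) (a b : ℕ), p.IsChain E → p.head? = some a → p.getLast? = some b →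
      b % 2 = 1 →
      (p.map (fun x : ℕ => if x % 2 = 1 then (1:ℤ) else -1)).sum = if a % 2 = 1 then 1 else 0
  | [], a, b, _, h, _, _ => by simp at h
  | [x], a, b, _, h, h', hb => by
    simp at h h'
    subst h; subst h'
    simp [hb]
  | x :: y :: l, a, b, hc, h, h', hb => by
    rw [List.isChain_cons_cons] at hc
    have ih := weight_path hE (y :: l) y b hc.2 rfl (by simpa using h') hb
    simp at h
    subst h
    rw [List.map_cons, List.sum_cons, ih]
    have := hE _ _ hc.1
    rcases Nat.mod_two_eq_zero_or_one x with h1 | h1 <;>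
    rcases Nat.mod_two_eq_zero_or_one y with h2 | h2 <;> simp_all

theorem weight_all (n : ℕ) :
    ∑ x ∈ Finset.Icc 1 (2*n+1), (if x % 2 = 1 then (1:ℤ) else -1) = 1 := by
  induction n with
  | zero => simp
  | succ n ih =>
    rw [show 2*(n+1)+1 = 2*n+1+1+1 by ring, Finset.sum_Icc_succ_top (by omega),
      Finset.sum_Icc_succ_top (by omega), ih]
    have h1 : (2*n+1+1) % 2 = 0 := by omega
    have h2 : (2*n+1+1+1) % 2 = 1 := by omega
    simp [h1, h2]

theorem single_visit_bip {E : ℕ → ℕ → Prop} (hE : ∀ x y, E x y → (x % 2 = 1 ↔ y % 2 = 0))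
    (n : ℕ) {k : ℕ} (inc out : Fin k → ℕ) (hi : ∀ j, inc j % 2 = 1) (ho : ∀ j, out j % 2 = 1) :
    SingleVisit E (Finset.Icc 1 (2*n+1)) inc out := by
  rintro ⟨P, hc, h1, h2, h3⟩
  have hV : Finset.Icc 1 (2*n+1) = P.biUnion List.toFinset := by
    ext x
    simp only [Finset.mem_biUnion, List.mem_toFinset]
    constructor
    · exact h3 x
    · rintro ⟨p, hp, hx⟩
      exact (h1 p hp).1.2.2.2 x hx
  have hw := weight_all n
  rw [hV, Finset.sum_biUnion] at hw
  · rw [Finset.sum_congr rfl (g := fun _ => (1:ℤ))] at hw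
    · simp at hw
      omega
    · intro p hp
      obtain ⟨⟨-, hn, hch, -⟩, ⟨j, hj⟩, m, hm⟩ := h1 p hp
      rw [List.sum_toFinset _ hn, weight_path hE p _ _ hch hj hm (ho m), if_pos (hi j)]
  · intro p hp q hq hpq
    rw [Function.onFun, Finset.disjoint_left]
    intro x hx hx'
    exact h2 p hp q hq hpq x (List.mem_toFinset.1 hx) (List.mem_toFinset.1 hx')

/-- The successor of an odd vertex. -/
theorem odd_next {K u v : ℕ} {p : List ℕ} (hv : v % 2 = 1)
    (hp : IsHamPathOn (SE K) (Finset.Icc 1 (4*K+1)) u v p) :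
    (∀ n, 2*n+1 < v → 2*n+1 ≤ 4*K+1 → NextIn p (2*n+1) (2*n+2)) ∧
    (∀ n, n ≤ 2*K → v < 4*K+1-2*n → NextIn p (4*K+1-2*n) (4*K-2*n)) := by
  constructor
  · intro n
    induction n with
    | zero =>
      intro h1 h2
      obtain ⟨y, hy⟩ := next_exists hp (x := 2*0+1) (by simp) (by omega)
      have := next_edge hp hy
      have : y = 2*0+2 := by unfold SE at this; omega
      rwa [this] at hy
    | succ n ih =>
      intro h1 h2
      have ih := ih (by omega) (by omega)
      obtain ⟨y, hy⟩ := next_exists hp (x := 2*(n+1)+1) (by simp; omega) (by omega)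
      have := next_edge hp hy
      have hne : y ≠ 2*n+2 := by
        rintro rfl
        have := next_inj hp ih hy
        omega
      have : y = 2*(n+1)+2 := by unfold SE at this; omega
      rwa [this] at hy
  · intro n
    induction n with
    | zero =>
      intro h1 h2
      obtain ⟨y, hy⟩ := next_exists hp (x := 4*K+1-2*0) (by simp) (by omega)
      have := next_edge hp hy
      have : y = 4*K-2*0 := by unfold SE at this; omega
      rwa [this] at hy
    | succ n ih =>
      intro h1 h2
      have ih := ih (by omega) (by omega)
      obtain ⟨y, hy⟩ := next_exists hp (x := 4*K+1-2*(n+1)) (by simp; omega) (by omega)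
      have := next_edge hp hy
      have hne : y ≠ 4*K-2*n := by
        rintro rfl
        have := next_inj hp ih hy
        omega
      have : y = 4*K-2*(n+1) := by unfold SE at this; omega
      rwa [this] at hy

/-- The start vertex belonging to the end vertex `v`. -/
def partner (K v : ℕ) : ℕ :=
  if v = 4*K+1 then 1 else if v = 3 then 4*K-1 else if v % 4 = 1 then v + 4 else v - 4

theorem ham_unique {K u v : ℕ} {p : List ℕ} (hK : 2 ≤ K) (hv : v % 2 = 1)
    (hvK : v ≤ 4*K+1) (hp : IsHamPathOn (SE K) (Finset.Icc 1 (4*K+1)) u v p) :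
    u = partner K v := by
  obtain ⟨hl, hr⟩ := odd_next hv hp
  have L : ∀ x, x % 2 = 1 → x < v → NextIn p x (x+1) := by
    intro x h1 h2
    have := hl (x/2) (by omega) (by omega)
    rwa [show 2*(x/2)+1 = x by omega, show 2*(x/2)+2 = x+1 by omega] at this
  have R : ∀ x, x % 2 = 0 → v < x → x ≤ 4*K → NextIn p (x+1) x := by
    intro x h1 h2 h3
    have := hr ((4*K-x)/2) (by omega) (by omega)
    rwa [show 4*K+1-2*((4*K-x)/2) = x+1 by omega,
      show 4*K-2*((4*K-x)/2) = x by omega] at this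
  -- no two-cycles
  have nL : ∀ x, x % 2 = 1 → x < v → ¬ NextIn p (x+1) x :=
    fun x h1 h2 h => next_irrefl2 hp h (L x h1 h2)
  have nR : ∀ x, x % 2 = 0 → v < x → x ≤ 4*K → ¬ NextIn p x (x+1) :=
    fun x h1 h2 h3 h => next_irrefl2 hp h (R x h1 h2 h3)
  have short : ∀ x, NextIn p u x → NextIn p x v → False := by
    intro x h1 h2
    have := next_short hp h1 h2
    simp at this
    omega
  have nx : ∀ x, 1 ≤ x → x ≤ 4*K+1 → x ≠ v → ∃ y, NextIn p x y ∧ SE K x y := by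
    intro x h1 h2 h3
    obtain ⟨y, hy⟩ := next_exists hp (Finset.mem_Icc.2 ⟨h1, h2⟩) h3
    exact ⟨y, hy, next_edge hp hy⟩
  have pv : ∀ x, 1 ≤ x → x ≤ 4*K+1 → x ≠ u → ∃ y, NextIn p y x ∧ SE K y x := by
    intro x h1 h2 h3
    obtain ⟨y, hy⟩ := prev_exists hp (Finset.mem_Icc.2 ⟨h1, h2⟩) h3
    exact ⟨y, hy, next_edge hp hy⟩
  -- the chord is not used when `4 < v`
  have chord : 4 < v → ¬ NextIn p (4*K) 5 := by
    intro h hc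
    obtain ⟨y, hy, he⟩ := nx 4 (by omega) (by omega) (by omega)
    have h3 : y = 3 ∨ y = 5 := by unfold SE at he; omega
    rcases h3 with rfl | rfl
    · exact nL 3 (by omega) (by omega) hy
    · have := next_inj hp hc hy
      omega
  by_contra hu
  unfold partner at hu
  split_ifs at hu with c1 c2 c3
  · -- v = d_K
    obtain ⟨y, hy, he⟩ := pv 1 (by omega) (by omega) (Ne.symm hu)
    have : y = 4*K-2 := by unfold SE at he; omega
    subst this
    have hub : 4*K-1 = u := by
      by_contra h
      obtain ⟨z, hz, he⟩ := pv (4*K-1) (by omega) (by omega) h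
      have : z = 4*K-2 ∨ z = 4*K-1+1 := by unfold SE at he; omega
      rcases this with rfl | rfl
      · have := next_func hp hy hz
        omega
      · exact nL _ (by omega) (by omega) hz
    have h1 := L (4*K-1) (by omega) (by omega)
    obtain ⟨z, hz, he⟩ := nx (4*K-1+1) (by omega) (by omega) (by omega)
    have : z = 4*K-1 ∨ z = v ∨ z = 5 := by unfold SE at he; omega
    rcases this with rfl | rfl | rfl
    · exact nL _ (by omega) (by omega) hz
    · exact short _ (hub ▸ h1) hz
    · rw [show 4*K-1+1 = 4*K by omega] at hz
      exact chord (by omega) hz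
  · -- v = b_1
    subst c2
    obtain ⟨y, hy, he⟩ := pv (4*K-1) (by omega) (by omega) (Ne.symm hu)
    have : y = 4*K-2 ∨ y = 4*K := by unfold SE at he; omega
    rcases this with rfl | rfl
    · refine nR (4*K-2) (by omega) (by omega) (by omega) ?_
      rwa [show 4*K-2+1 = 4*K-1 by omega]
    have hud : 5 = u := by
      by_contra h
      obtain ⟨z, hz, he⟩ := pv 5 (by omega) (by omega) h
      have : z = 4 ∨ z = 4*K := by unfold SE at he; omega
      rcases this with rfl | rfl
      · exact nR 4 (by omega) (by omega) (by omega) hz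
      · have := next_func hp hy hz
        omega
    have h1 := R 4 (by omega) (by omega) (by omega)
    obtain ⟨z, hz, he⟩ := nx 4 (by omega) (by omega) (by omega)
    have : z = 3 ∨ z = 5 := by unfold SE at he; omega
    rcases this with rfl | rfl
    · exact short _ (hud ▸ h1) hz
    · exact nR 4 (by omega) (by omega) (by omega) hz
  · by_cases c4 : v = 1
    · -- v = d_0
      subst c4
      obtain ⟨y, hy, he⟩ := pv 5 (by omega) (by omega) (Ne.symm hu)
      have : y = 4 ∨ y = 4*K := by unfold SE at he; omega
      rcases this with rfl | rfl
      · exact nR 4 (by omega) (by omega) (by omega) hy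
      have hub : 4*K-2+1 = u := by
        by_contra h
        obtain ⟨z, hz, he⟩ := pv (4*K-2+1) (by omega) (by omega) h
        have : z = 4*K-2 ∨ z = 4*K := by unfold SE at he; omega
        rcases this with rfl | rfl
        · exact nR _ (by omega) (by omega) (by omega) hz
        · have := next_func hp hy hz
          omega
      have h1 := R (4*K-2) (by omega) (by omega) (by omega)
      obtain ⟨z, hz, he⟩ := nx (4*K-2) (by omega) (by omega) (by omega)
      have : z = 4*K-2+1 ∨ z = 1 := by unfold SE at he; omega
      rcases this with rfl | rfl
      · exact nR _ (by omega) (by omega) (by omega) hz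
      · exact short _ (hub ▸ h1) hz
    · -- v = d_j, 1 ≤ j < K
      obtain ⟨y, hy, he⟩ := pv (v+4) (by omega) (by omega) (Ne.symm hu)
      have : y = v-3 ∨ y = v+3 := by unfold SE at he; omega
      rcases this with rfl | rfl
      swap
      · exact nR (v+3) (by omega) (by omega) (by omega) hy
      have hub : v-2 = u := by
        by_contra h
        obtain ⟨z, hz, he⟩ := pv (v-2) (by omega) (by omega) h
        have : z = v-3 ∨ z = v-2+1 := by unfold SE at he; omega
        rcases this with rfl | rfl
        · have := next_func hp hy hz
          omega
        · exact nL _ (by omega) (by omega) hz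
      have h1 := L (v-2) (by omega) (by omega)
      obtain ⟨z, hz, he⟩ := nx (v-2+1) (by omega) (by omega) (by omega)
      have : z = v-2 ∨ z = v := by unfold SE at he; omega
      rcases this with rfl | rfl
      · exact nL _ (by omega) (by omega) hz
      · exact short _ (hub ▸ h1) hz
  · -- v = b_j, 2 ≤ j
    obtain ⟨y, hy, he⟩ := pv (v-4) (by omega) (by omega) (Ne.symm hu)
    have : y = v-5 ∨ y = v-4+1 := by unfold SE at he; omega
    rcases this with rfl | rfl
    swap
    · exact nL _ (by omega) (by omega) hy
    have hud : v+1+1 = u := by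
      by_contra h
      obtain ⟨z, hz, he⟩ := pv (v+1+1) (by omega) (by omega) h
      have : z = v-5 ∨ z = v+1 := by unfold SE at he; omega
      rcases this with rfl | rfl
      · have := next_func hp hy hz
        omega
      · exact nR _ (by omega) (by omega) (by omega) hz
    have h1 := R (v+1) (by omega) (by omega) (by omega)
    obtain ⟨z, hz, he⟩ := nx (v+1) (by omega) (by omega) (by omega)
    have : z = v ∨ z = v+1+1 ∨ (v+1 = 4*K ∧ z = 5) := by unfold SE at he; omega
    rcases this with rfl | rfl | ⟨e, rfl⟩
    · exact short _ (hud ▸ h1) hz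
    · exact nR _ (by omega) (by omega) (by omega) hz
    · rw [e] at hz
      exact chord (by omega) hz

/-- Building a Hamiltonian path from an enumeration of the vertices. -/
theorem ham_of_fun {E : ℕ → ℕ → Prop} (N : ℕ) (f : ℕ → ℕ) (u v : ℕ)
    (h0 : f 0 = u) (h1 : f N = v) (hE : ∀ t, t < N → E (f t) (f (t+1)))
    (hr : ∀ t, t ≤ N → 1 ≤ f t ∧ f t ≤ N+1)
    (hinj : ∀ s t, s ≤ N → t ≤ N → f s = f t → s = t) :
    ∃ p, IsHamPathOn E (Finset.Icc 1 (N+1)) u v p := by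
  refine ⟨(List.range (N+1)).map f, ?_, ?_, ?_, ?_, ?_⟩
  · refine List.Nodup.map_on ?_ List.nodup_range
    intro s hs t ht h
    rw [List.mem_range] at hs ht
    exact hinj s t (by omega) (by omega) h
  · refine List.isChain_iff_getElem.2 ?_
    intro t ht
    simp at ht ⊢
    exact hE t ht
  · simp [List.head?_range, h0]
  · simp [List.getLast?_range, h1]
  · have himg : (Finset.range (N+1)).image f = Finset.Icc 1 (N+1) := by
      apply Finset.eq_of_subset_of_card_le
      · intro x hx
        obtain ⟨t, ht, rfl⟩ := Finset.mem_image.1 hx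
        rw [Finset.mem_range] at ht
        exact Finset.mem_Icc.2 (hr t (by omega))
      · rw [Finset.card_image_of_injOn]
        · simp
        · intro s hs t ht h
          simp at hs ht
          exact hinj s t (by omega) (by omega) h
    intro x
    rw [← himg]
    simp

set_option maxHeartbeats 4000000 in
theorem ham_exists {K v : ℕ} (hK : 2 ≤ K) (hv : v % 2 = 1) (hvK : v ≤ 4*K+1) :
    ∃ p, IsHamPathOn (SE K) (Finset.Icc 1 (4*K+1)) (partner K v) v p := by
  unfold partner
  split_ifs with c1 c2 c3
  · refine ham_of_fun (4*K) (fun t => t+1) _ _ rfl c1.symm ?_ ?_ ?_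
    · intro t ht; unfold SE; omega
    · intro t ht; omega
    · intro s t hs ht h; omega
  · refine ham_of_fun (4*K) (fun t => if t < 2 then 4*K-1-t else if t < 4 then t - 1 else
      if t < 4*K-4 then 5+t-2*(t%4) else if t < 4*K-2 then 8*K-3-t
      else 4*K+3-t) _ _ ?_ ?_ ?_ ?_ ?_
    · simp
    · split_ifs <;> omega
    · intro t ht
      have h4 : t % 4 = 0 ∨ t % 4 = 1 ∨ t % 4 = 2 ∨ t % 4 = 3 := by omega
      split_ifs
      all_goals first
        | (exfalso; omega)
        | exact Or.inl ⟨by omega, by omega, by omega⟩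
        | exact Or.inr (Or.inr (Or.inr (Or.inl ⟨by omega, by omega⟩)))
        | exact Or.inr (Or.inr (Or.inr (Or.inr ⟨by omega, by omega⟩)))
        | exact Or.inr (Or.inl ⟨by omega, by omega, by omega, by omega⟩)
        | exact Or.inr (Or.inr (Or.inl ⟨by omega, by omega, by omega⟩))
        | (rcases h4 with h4 | h4 | h4 | h4
           all_goals first
            | exact Or.inl ⟨by omega, by omega, by omega⟩
            | exact Or.inr (Or.inl ⟨by omega, by omega, by omega, by omega⟩)
            | exact Or.inr (Or.inr (Or.inl ⟨by omega, by omega, by omega⟩))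
            | exact Or.inr (Or.inr (Or.inr (Or.inl ⟨by omega, by omega⟩)))
            | exact Or.inr (Or.inr (Or.inr (Or.inr ⟨by omega, by omega⟩)))
            | (exfalso; omega))
    · intro t ht; split_ifs <;> omega
    · intro s t hs ht h; split_ifs at h <;> omega
  · refine ham_of_fun (4*K) (fun t => if t < 4*K+1-v then v+4+t-2*(t%4) else
      t - (4*K+1-v) + 1) _ _ ?_ ?_ ?_ ?_ ?_
    · split_ifs <;> omega
    · split_ifs <;> omega
    · intro t ht
      have h4 : t % 4 = 0 ∨ t % 4 = 1 ∨ t % 4 = 2 ∨ t % 4 = 3 := by omega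
      split_ifs
      all_goals first
        | (exfalso; omega)
        | exact Or.inl ⟨by omega, by omega, by omega⟩
        | exact Or.inr (Or.inr (Or.inr (Or.inl ⟨by omega, by omega⟩)))
        | exact Or.inr (Or.inr (Or.inr (Or.inr ⟨by omega, by omega⟩)))
        | exact Or.inr (Or.inl ⟨by omega, by omega, by omega, by omega⟩)
        | exact Or.inr (Or.inr (Or.inl ⟨by omega, by omega, by omega⟩))
        | (rcases h4 with h4 | h4 | h4 | h4
           all_goals first
            | exact Or.inl ⟨by omega, by omega, by omega⟩
            | exact Or.inr (Or.inl ⟨by omega, by omega, by omega, by omega⟩)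
            | exact Or.inr (Or.inr (Or.inl ⟨by omega, by omega, by omega⟩))
            | exact Or.inr (Or.inr (Or.inr (Or.inl ⟨by omega, by omega⟩)))
            | exact Or.inr (Or.inr (Or.inr (Or.inr ⟨by omega, by omega⟩)))
            | (exfalso; omega))
    · intro t ht; split_ifs <;> omega
    · intro s t hs ht h; split_ifs at h <;> omega
  · -- v = 4j+3, u = 4j-1
    refine ham_of_fun (4*K) (fun t => if t < 4 then v-4+t else
      if t < 4*K+4-v-1 then v+2+t-2*(t%4) else
      if t < 4*K-2 then t - (4*K+3-v) + 1 else v+4*K-t) _ _ ?_ ?_ ?_ ?_ ?_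
    · split_ifs <;> omega
    · split_ifs <;> omega
    · intro t ht
      have h4 : t % 4 = 0 ∨ t % 4 = 1 ∨ t % 4 = 2 ∨ t % 4 = 3 := by omega
      split_ifs
      all_goals first
        | (exfalso; omega)
        | exact Or.inl ⟨by omega, by omega, by omega⟩
        | exact Or.inr (Or.inr (Or.inr (Or.inl ⟨by omega, by omega⟩)))
        | exact Or.inr (Or.inr (Or.inr (Or.inr ⟨by omega, by omega⟩)))
        | exact Or.inr (Or.inl ⟨by omega, by omega, by omega, by omega⟩)
        | exact Or.inr (Or.inr (Or.inl ⟨by omega, by omega, by omega⟩))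
        | (rcases h4 with h4 | h4 | h4 | h4
           all_goals first
            | exact Or.inl ⟨by omega, by omega, by omega⟩
            | exact Or.inr (Or.inl ⟨by omega, by omega, by omega, by omega⟩)
            | exact Or.inr (Or.inr (Or.inl ⟨by omega, by omega, by omega⟩))
            | exact Or.inr (Or.inr (Or.inr (Or.inl ⟨by omega, by omega⟩)))
            | exact Or.inr (Or.inr (Or.inr (Or.inr ⟨by omega, by omega⟩)))
            | (exfalso; omega))
    · intro t ht; split_ifs <;> omega
    · intro s t hs ht h; split_ifs at h <;> omega

theorem oddOut_spec {K j : ℕ} (hK : 2 ≤ K) (hj : j < 2*K+1) :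
    oddOut (2*K+1) (j+1) % 2 = 1 ∧ 1 ≤ oddOut (2*K+1) (j+1) ∧
      oddOut (2*K+1) (j+1) ≤ 4*K+1 ∧ partner K (oddOut (2*K+1) (j+1)) = 2*j+1 := by
  unfold oddOut partner
  simp only [Nat.even_iff]
  split_ifs <;> omega

/-- for odd `k ≥ 5`, the digraph `S_k` with incoming vertices
`i_j = 2j - 1` and outgoing vertices `o_j` is a `k`-in-out graph, it has exactly
`2k - 1` vertices, and `2k - 1` is the minimum possible number of vertices of a
`k`-in-out graph. -/
theorem oddSk_isInOut_optimal (k : ℕ) (hk : 5 ≤ k) (hko : Odd k) :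
    IsInOutGraph (fun x y => (x, y) ∈ oddEdges k) (Finset.Icc 1 (2 * k - 1))
      (fun j : Fin k => 2 * (j : ℕ) + 1) (fun j : Fin k => oddOut k ((j : ℕ) + 1)) ∧
    (Finset.Icc 1 (2 * k - 1)).card = 2 * k - 1 ∧
    ∀ {β : Type} [DecidableEq β] (E' : β → β → Prop) (Vset' : Finset β)
      (inc' out' : Fin k → β), IsInOutGraph E' Vset' inc' out' →
        2 * k - 1 ≤ Vset'.card := by
  obtain ⟨K, rfl⟩ := hko
  have hK : 2 ≤ K := by omega
  have hV : 2 * (2*K+1) - 1 = 4*K+1 := by omega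
  have hE : (fun x y => (x, y) ∈ oddEdges (2*K+1)) = SE K := by
    funext x y
    exact propext (mem_oddEdges K hK x y)
  refine ⟨?_, by simp, ?_⟩
  · rw [hV, hE]
    have hinc : Function.Injective (fun j : Fin (2*K+1) => 2 * (j : ℕ) + 1) := by
      intro a b h
      dsimp only at h
      exact Fin.ext (by omega)
    have hspec := fun j : Fin (2*K+1) => oddOut_spec (K := K) hK j.2
    refine ⟨?_, ?_, ?_, ?_, hinc, ?_, ?_, ?_⟩
    · intro x h
      unfold SE at h
      omega
    · intro x y h
      unfold SE at h
      rw [Finset.mem_Icc, Finset.mem_Icc]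
      omega
    · intro j
      have := j.2
      rw [Finset.mem_Icc]
      omega
    · intro j
      exact Finset.mem_Icc.2 ⟨(hspec j).2.1, (hspec j).2.2.1⟩
    · intro a b h
      apply hinc
      dsimp only at h ⊢
      rw [← (hspec a).2.2.2, ← (hspec b).2.2.2, h]
    · intro j m
      obtain ⟨s1, s2, s3, s4⟩ := hspec m
      constructor
      · rintro ⟨p, hp⟩
        have := ham_unique hK s1 s3 hp
        rw [s4] at this
        exact hinc this
      · rintro rfl
        have := ham_exists hK s1 s3
        rw [s4] at this
        exact this
    · have h := single_visit_bip (E := SE K) ?_ (2*K) (fun j : Fin (2*K+1) => 2 * (j : ℕ) + 1)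
        (fun j : Fin (2*K+1) => oddOut (2*K+1) ((j : ℕ) + 1)) ?_ (fun j => (hspec j).1)
      · rwa [show 2*(2*K)+1 = 4*K+1 by ring] at h
      · intro x y h
        unfold SE at h
        omega
      · intro j
        omega
  · intro β _ E' V' inc' out' H
    exact inOut_lower (by omega) E' V' inc' out' H
end
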